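/- Let F : ℝ⁴ → ℝ⁴ be a bijection with layers U_n and S_n as defined. Suppose x ∈ U_{n₁} ∩ S_{n₂} where n₁ and n₂ have the same parity (n₁ ≡ n₂ mod 2). Then, setting k = (n₂ − n₁)/2 and ñ = (n₁ + n₂)/2, one has F^k(x) ∈ U_ñ ∩ S_ñ. -/

import Mathlib

/-! In the coordinates `(θ, s)` the iterate `F ^ k` acts by `s ↦ lam ^ k * s`
(`zpow_apply_param`), so it shifts the unstable layer index by `k` and the stable one by `-k`
(`zpow_annulus`). By the parity assumption `k = (n₂ - n₁) / 2` is exact, and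
`n₁ + k = n₂ - k = (n₁ + n₂) / 2`. -/


/-- The `n`-th unstable layer. -/
def unstableLayer (W : ℝ × ℝ → Fin 4 → ℝ) (D lam : ℝ) (n : ℤ) : Set (Fin 4 → ℝ) :=
  {x | ∃ θ s : ℝ, D * lam ^ (n - 1) ≤ |s| ∧ |s| ≤ D * lam ^ n ∧ x = W (θ, s)}

/-- The `n`-th stable layer. -/
def stableLayer (W : ℝ × ℝ → Fin 4 → ℝ) (D lam : ℝ) (n : ℤ) : Set (Fin 4 → ℝ) :=
  {x | ∃ θ s : ℝ, D * lam ^ (-(n - 1)) ≤ |s| ∧ |s| ≤ D * lam ^ (-n) ∧ x = W (θ, s)}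

/-- The conjugacy of `F` with a skew rotation-dilation extends to all integer iterates; negative
ones use the invertibility of `F` and `lam ≠ 0`. -/
theorem zpow_apply_param (F : Equiv.Perm (Fin 4 → ℝ)) (ω lam : ℝ) (hlam : lam ≠ 0)
    (W : ℝ × ℝ → Fin 4 → ℝ) (hW : ∀ θ s : ℝ, F (W (θ, s)) = W (θ + ω, lam * s))
    (k : ℤ) (θ s : ℝ) : (F ^ k) (W (θ, s)) = W (θ + k * ω, lam ^ k * s) := by
  induction k using Int.induction_on with
  | zero => simp
  | succ k ih =>
    rw [add_comm (k : ℤ) 1, zpow_add, zpow_one, Equiv.Perm.mul_apply, ih, hW, zpow_add₀ hlam]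
    congr 2
    · push_cast
      ring
    · rw [zpow_one, mul_assoc]
  | pred k ih =>
    apply F.injective
    have h : F * F ^ (-(k : ℤ) - 1) = F ^ (-(k : ℤ)) := by
      rw [← zpow_one_add]
      congr 1
      ring
    rw [← Equiv.Perm.mul_apply, h, ih, hW, zpow_sub_one₀ hlam]
    congr 2
    · push_cast
      ring
    · field_simp

/-- The iterate `F ^ k` scales `|s|` by `lam ^ k`, so it maps the image of the annulus with
exponents `a`, `b` into the image of the annulus with exponents `k + a`, `k + b`. -/
theorem zpow_annulus (F : Equiv.Perm (Fin 4 → ℝ)) (ω lam D : ℝ) (hlam : 0 < lam)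
    (W : ℝ × ℝ → Fin 4 → ℝ) (hW : ∀ θ s : ℝ, F (W (θ, s)) = W (θ + ω, lam * s))
    (k a b : ℤ) (x : Fin 4 → ℝ)
    (hx : ∃ θ s : ℝ, D * lam ^ a ≤ |s| ∧ |s| ≤ D * lam ^ b ∧ x = W (θ, s)) :
    ∃ θ s : ℝ, D * lam ^ (k + a) ≤ |s| ∧ |s| ≤ D * lam ^ (k + b) ∧
      (F ^ k) x = W (θ, s) := by
  obtain ⟨θ, s, h1, h2, rfl⟩ := hx
  have hk : 0 < lam ^ k := zpow_pos hlam k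
  refine ⟨_, _, ?_, ?_, zpow_apply_param F ω lam hlam.ne' W hW k θ s⟩
  · rw [abs_mul, abs_of_pos hk, zpow_add₀ hlam.ne', mul_left_comm]
    exact mul_le_mul_of_nonneg_left h1 hk.le
  · rw [abs_mul, abs_of_pos hk, zpow_add₀ hlam.ne', mul_left_comm]
    exact mul_le_mul_of_nonneg_left h2 hk.le

/-- If `x ∈ U n₁ ∩ S n₂` with `n₁ ≡ n₂ (mod 2)`, then with
`k = (n₂ - n₁)/2` and `ñ = (n₁ + n₂)/2`, one has `F^k x ∈ U ñ ∩ S ñ`. -/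
theorem heteroclinic_same_parity (F : Equiv.Perm (Fin 4 → ℝ))
    (ωu lamu Du ωs lams Ds : ℝ)
    (hlamu : 1 < lamu) (hDu : 0 < Du) (hlams0 : 0 < lams) (hlams1 : lams < 1)
    (hDs : 0 < Ds) (W₁u W₂s : ℝ × ℝ → Fin 4 → ℝ)
    (hWu : ∀ θ s : ℝ, F (W₁u (θ, s)) = W₁u (θ + ωu, lamu * s))
    (hWs : ∀ θ s : ℝ, F (W₂s (θ, s)) = W₂s (θ + ωs, lams * s))
    (x : Fin 4 → ℝ) (n₁ n₂ : ℤ) (hpar : n₁ % 2 = n₂ % 2)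
    (hx : x ∈ unstableLayer W₁u Du lamu n₁ ∩ stableLayer W₂s Ds lams n₂) :
    (F ^ ((n₂ - n₁) / 2)) x ∈
      unstableLayer W₁u Du lamu ((n₁ + n₂) / 2) ∩
        stableLayer W₂s Ds lams ((n₁ + n₂) / 2) := by
  have hu : (n₁ + n₂) / 2 = (n₂ - n₁) / 2 + n₁ := by omega
  have hs : (n₁ + n₂) / 2 = n₂ - (n₂ - n₁) / 2 := by omega
  constructor
  · rw [hu]
    have h := zpow_annulus F ωu lamu Du (by linarith) W₁u hWu ((n₂ - n₁) / 2) _ _ x hx.1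
    rwa [← add_sub_assoc] at h
  · rw [hs]
    have h := zpow_annulus F ωs lams Ds hlams0 W₂s hWs ((n₂ - n₁) / 2) _ _ x hx.2
    generalize (n₂ - n₁) / 2 = k at h ⊢
    rwa [show k + -(n₂ - 1) = -(n₂ - k - 1) by ring,
      show k + -n₂ = -(n₂ - k) by ring] at h
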